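/- Let (m, α, μ), (n, β, ν) and (c, γ, ξ) be classical systems with coordinates k = (k_1,…,k_d) (each k_i ∈ ℝ^m), l = (l_1,…,l_d) (each l_i ∈ ℝ^n) and h = (h_1,…,h_d) (each h_i ∈ ℝ^c) respectively. Then the Wasserstein distances satisfy the triangle inequality: W((m,α,μ),(c,γ,ξ)) ≤ W((m,α,μ),(n,β,ν)) + W((n,β,ν),(c,γ,ξ)), where each distance is formed with the coordinate tuples of the two systems involved. -/

import Mathlib

/-- A classical system: a row-stochastic matrix α with strictly positive invariant
probability vector μ. -/
def IsClassicalSystem {m : ℕ} (α : Fin m → Fin m → ℝ) (μ : Fin m → ℝ) : Prop :=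
  (∀ p q, 0 ≤ α p q) ∧ (∀ p, ∑ q, α p q = 1) ∧
  (∀ p, 0 < μ p) ∧ (∑ p, μ p = 1) ∧ (∀ q, ∑ p, μ p * α p q = μ q)

/-- A coupling of the probability vectors μ and ν. -/
def IsCoupling {m n : ℕ} (μ : Fin m → ℝ) (ν : Fin n → ℝ) (ω : Fin m → Fin n → ℝ) : Prop :=
  (∀ p r, 0 ≤ ω p r) ∧ (∀ p, ∑ r, ω p r = μ p) ∧ (∀ r, ∑ p, ω p r = ν r)

/-- A transport plan from the system (m, α, μ) to the system (n, β, ν): a coupling ω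
satisfying Σ_p ω_{pr} α_{pq} = Σ_s ω_{qs} (ν_r/ν_s) β_{rs} for all q, r. -/
def IsTransportPlan {m n : ℕ} (α : Fin m → Fin m → ℝ) (μ : Fin m → ℝ)
    (β : Fin n → Fin n → ℝ) (ν : Fin n → ℝ) (ω : Fin m → Fin n → ℝ) : Prop :=
  IsCoupling μ ν ω ∧
    ∀ (q : Fin m) (r : Fin n), ∑ p, ω p r * α p q = ∑ s, ω q s * (ν r / ν s * β r s)

/-- The quadratic transport cost of a coupling ω relative to the coordinates k and l. -/
def transportCost {d m n : ℕ} (k : Fin d → Fin m → ℝ) (l : Fin d → Fin n → ℝ)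
    (ω : Fin m → Fin n → ℝ) : ℝ :=
  ∑ i, ∑ p, ∑ r, ω p r * (k i p - l i r) ^ 2

/-- The Wasserstein distance from (m, α, μ) with coordinates k to (n, β, ν) with
coordinates l. -/
noncomputable def Wdist {d m n : ℕ} (α : Fin m → Fin m → ℝ) (μ : Fin m → ℝ)
    (β : Fin n → Fin n → ℝ) (ν : Fin n → ℝ)
    (k : Fin d → Fin m → ℝ) (l : Fin d → Fin n → ℝ) : ℝ :=
  sInf {x | ∃ ω, IsTransportPlan α μ β ν ω ∧ x = Real.sqrt (transportCost k l ω)}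

/-! A plan `ω` from `α` to `β` and a plan `η` from `β` to `γ` are glued along the middle system into
the weights `ω p r * η r t / ν r` on triples, whose three two-index marginals are `ω`, `η` and the
matrix product `ω D⁻¹ η`, where `D = diag ν`. Minkowski's inequality in the `L²` space of these
weights is the triangle inequality for the costs. In matrix form, `ω` is a transport plan when
`αᵀ ω = ω D⁻¹ βᵀ D`, so `ω D⁻¹ η` intertwines because `D D⁻¹ = 1`. Product couplings are transport
plans, so both infima on the right-hand side run over nonempty sets. -/

open Matrix

lemma sqrt_sum_mul_sq_eq_norm {ι : Type*} [Fintype ι] {w : ι → ℝ} (hw : ∀ i, 0 ≤ w i)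
    (f : ι → ℝ) :
    √(∑ i, w i * f i ^ 2) = ‖WithLp.toLp 2 fun i => √(w i) * f i‖ := by
  simp only [EuclideanSpace.norm_eq, Real.norm_eq_abs, sq_abs, mul_pow, Real.sq_sqrt (hw _)]

lemma sqrt_sum_mul_add_sq_le {ι : Type*} [Fintype ι] {w : ι → ℝ} (hw : ∀ i, 0 ≤ w i)
    (f g : ι → ℝ) :
    √(∑ i, w i * (f i + g i) ^ 2) ≤ √(∑ i, w i * f i ^ 2) + √(∑ i, w i * g i ^ 2) := by
  simp only [sqrt_sum_mul_sq_eq_norm hw, mul_add]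
  exact norm_add_le (WithLp.toLp 2 fun i => √(w i) * f i) (WithLp.toLp 2 fun i => √(w i) * g i)

lemma sqrt_transportCost_marginal_le {d m n c : ℕ} {ρ : Fin m → Fin n → Fin c → ℝ}
    (hρ : ∀ p r t, 0 ≤ ρ p r t)
    (k : Fin d → Fin m → ℝ) (l : Fin d → Fin n → ℝ) (h : Fin d → Fin c → ℝ) :
    √(transportCost k h fun p t => ∑ r, ρ p r t) ≤
      √(transportCost k l fun p r => ∑ t, ρ p r t) +
        √(transportCost l h fun r t => ∑ p, ρ p r t) := by
  have minkowski := sqrt_sum_mul_add_sq_le (ι := Fin d × Fin m × Fin n × Fin c)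
    (w := fun x => ρ x.2.1 x.2.2.1 x.2.2.2) (fun _ => hρ _ _ _)
    (fun x => k x.1 x.2.1 - l x.1 x.2.2.1) (fun x => l x.1 x.2.2.1 - h x.1 x.2.2.2)
  simp only [Fintype.sum_prod_type, sub_add_sub_cancel] at minkowski
  have cost_kh : transportCost k h (fun p t => ∑ r, ρ p r t) =
      ∑ i, ∑ p, ∑ r, ∑ t, ρ p r t * (k i p - h i t) ^ 2 := by
    simp only [transportCost, Finset.sum_mul]
    exact Finset.sum_congr rfl fun i _ => Finset.sum_congr rfl fun p _ => Finset.sum_comm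
  have cost_lh : transportCost l h (fun r t => ∑ p, ρ p r t) =
      ∑ i, ∑ p, ∑ r, ∑ t, ρ p r t * (l i r - h i t) ^ 2 := by
    simp only [transportCost, Finset.sum_mul]
    refine Finset.sum_congr rfl fun i _ => ?_
    rw [Finset.sum_comm (s := (Finset.univ : Finset (Fin m)))]
    exact Finset.sum_congr rfl fun r _ => Finset.sum_comm
  rw [cost_kh, cost_lh]
  simpa only [transportCost, Finset.sum_mul] using minkowski

section Gluing

variable {ι κ τ 𝕜 : Type*} [Field 𝕜]

/-- The gluing of `ω` and `η` along their common marginal `ν`: the joint law of a triple whose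
outer entries are conditionally independent given the middle one. At `ν r = 0` division returns
`0`, which is the right value since `ω p r` and `η r t` vanish there for couplings. -/
def gluing (ν : κ → 𝕜) (ω : ι → κ → 𝕜) (η : κ → τ → 𝕜) (p : ι) (r : κ) (t : τ) : 𝕜 :=
  ω p r * η r t / ν r

/-- The composition of `ω` and `η` over `ν`: the marginal of their gluing on the outer entries. -/
def gluingComp [Fintype κ] (ν : κ → 𝕜) (ω : ι → κ → 𝕜) (η : κ → τ → 𝕜) (p : ι) (t : τ) : 𝕜 :=
  ∑ r, gluing ν ω η p r t

lemma of_gluingComp [Fintype κ] [DecidableEq κ] (ν : κ → 𝕜) (ω : ι → κ → 𝕜) (η : κ → τ → 𝕜) :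
    of (gluingComp ν ω η) = of ω * diagonal ν⁻¹ * of η := by
  ext p t
  simp only [of_apply, gluingComp, gluing, mul_apply (M := of ω * diagonal ν⁻¹), mul_diagonal,
    Pi.inv_apply]
  exact Finset.sum_congr rfl fun r _ => by ring

end Gluing

namespace IsCoupling

variable {m n c : ℕ} {μ : Fin m → ℝ} {ν : Fin n → ℝ} {ξ : Fin c → ℝ}
  {ω : Fin m → Fin n → ℝ} {η : Fin n → Fin c → ℝ}

lemma nonneg_left (hω : IsCoupling μ ν ω) (p : Fin m) : 0 ≤ μ p :=
  hω.2.1 p ▸ Finset.sum_nonneg fun r _ => hω.1 p r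

lemma apply_eq_zero_of_left (hω : IsCoupling μ ν ω) {p : Fin m} (hp : μ p = 0) (r : Fin n) :
    ω p r = 0 :=
  (Finset.sum_eq_zero_iff_of_nonneg fun r _ => hω.1 p r).1 ((hω.2.1 p).trans hp) r
    (Finset.mem_univ r)

lemma apply_eq_zero_of_right (hω : IsCoupling μ ν ω) {r : Fin n} (hr : ν r = 0) (p : Fin m) :
    ω p r = 0 :=
  (Finset.sum_eq_zero_iff_of_nonneg fun p _ => hω.1 p r).1 ((hω.2.2 r).trans hr) p
    (Finset.mem_univ p)

lemma gluing_nonneg (hω : IsCoupling μ ν ω) (hη : IsCoupling ν ξ η)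
    (p : Fin m) (r : Fin n) (t : Fin c) : 0 ≤ gluing ν ω η p r t :=
  div_nonneg (mul_nonneg (hω.1 p r) (hη.1 r t)) (hη.nonneg_left r)

lemma sum_gluing_right (hω : IsCoupling μ ν ω) (hη : IsCoupling ν ξ η) (p : Fin m) (r : Fin n) :
    ∑ t, gluing ν ω η p r t = ω p r := by
  simp only [gluing]
  rw [← Finset.sum_div, ← Finset.mul_sum, hη.2.1]
  exact mul_div_cancel_of_imp fun hr => hω.apply_eq_zero_of_right hr p

lemma sum_gluing_left (hω : IsCoupling μ ν ω) (hη : IsCoupling ν ξ η) (r : Fin n) (t : Fin c) :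
    ∑ p, gluing ν ω η p r t = η r t := by
  simp only [gluing]
  rw [← Finset.sum_div, ← Finset.sum_mul, hω.2.2]
  exact mul_div_cancel_left_of_imp fun hr => hη.apply_eq_zero_of_left hr t

lemma comp (hω : IsCoupling μ ν ω) (hη : IsCoupling ν ξ η) :
    IsCoupling μ ξ (gluingComp ν ω η) := by
  refine ⟨fun p t => Finset.sum_nonneg fun r _ => hω.gluing_nonneg hη p r t,
    fun p => ?_, fun t => ?_⟩
  · calc ∑ t, ∑ r, gluing ν ω η p r t
      _ = ∑ r, ∑ t, gluing ν ω η p r t := Finset.sum_comm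
      _ = μ p := by simp only [hω.sum_gluing_right hη, hω.2.1]
  · calc ∑ p, ∑ r, gluing ν ω η p r t
      _ = ∑ r, ∑ p, gluing ν ω η p r t := Finset.sum_comm
      _ = ξ t := by simp only [hω.sum_gluing_left hη, hη.2.2]

lemma sqrt_transportCost_comp_le {d : ℕ} (hω : IsCoupling μ ν ω) (hη : IsCoupling ν ξ η)
    (k : Fin d → Fin m → ℝ) (l : Fin d → Fin n → ℝ) (h : Fin d → Fin c → ℝ) :
    √(transportCost k h (gluingComp ν ω η)) ≤
      √(transportCost k l ω) + √(transportCost l h η) := by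
  have glued := sqrt_transportCost_marginal_le (hω.gluing_nonneg hη) k l h
  simp only [hω.sum_gluing_right hη, hω.sum_gluing_left hη] at glued
  exact glued

lemma prod (hμ : ∀ p, 0 ≤ μ p) (hμ_sum : ∑ p, μ p = 1) (hν : ∀ r, 0 ≤ ν r)
    (hν_sum : ∑ r, ν r = 1) : IsCoupling μ ν (fun p r => μ p * ν r) :=
  ⟨fun p r => mul_nonneg (hμ p) (hν r),
    fun p => by rw [← Finset.mul_sum, hν_sum, mul_one],
    fun r => by rw [← Finset.sum_mul, hμ_sum, one_mul]⟩

end IsCoupling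

section TimeReversal

variable {ι κ τ 𝕜 : Type*} [Fintype κ] [DecidableEq κ] [Field 𝕜]

/-- The time reversal of the transition matrix `B` with respect to the weights `ν`, with entries
`ν r / ν s * B r s` at `(s, r)`. -/
def timeReversal (ν : κ → 𝕜) (B : Matrix κ κ 𝕜) : Matrix κ κ 𝕜 :=
  diagonal ν⁻¹ * Bᵀ * diagonal ν

lemma vecMul_timeReversal {ν : κ → 𝕜} {B : Matrix κ κ 𝕜} (hν : ∀ r, ν r ≠ 0)
    (hB : B *ᵥ 1 = 1) : ν ᵥ* timeReversal ν B = ν := by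
  have vecMul_inv : ν ᵥ* diagonal ν⁻¹ = 1 := by
    ext r
    simp [vecMul_diagonal, hν r]
  ext r
  simp [timeReversal, ← vecMul_vecMul, vecMul_inv, vecMul_transpose, hB, vecMul_diagonal]

lemma intertwines_comp [Fintype ι] [Fintype τ] {ν : κ → 𝕜} {A : Matrix ι ι 𝕜}
    {B : Matrix κ κ 𝕜} {C : Matrix τ τ 𝕜} {W : Matrix ι κ 𝕜} {H : Matrix κ τ 𝕜}
    (hν : ∀ r, ν r ≠ 0) (hW : A * W = W * timeReversal ν B) (hH : Bᵀ * H = H * C) :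
    A * (W * diagonal ν⁻¹ * H) = W * diagonal ν⁻¹ * H * C := by
  have diagonal_mul_inv : diagonal ν * diagonal ν⁻¹ = 1 := by
    rw [diagonal_mul_diagonal, ← diagonal_one]
    exact congrArg diagonal (funext fun r => mul_inv_cancel₀ (hν r))
  calc A * (W * diagonal ν⁻¹ * H)
    _ = A * W * diagonal ν⁻¹ * H := by simp only [Matrix.mul_assoc]
    _ = W * diagonal ν⁻¹ * Bᵀ * (diagonal ν * diagonal ν⁻¹) * H := by
      simp only [hW, timeReversal, Matrix.mul_assoc]
    _ = W * diagonal ν⁻¹ * (Bᵀ * H) := by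
      rw [diagonal_mul_inv, Matrix.mul_one, Matrix.mul_assoc]
    _ = W * diagonal ν⁻¹ * H * C := by rw [hH, Matrix.mul_assoc _ H C]

end TimeReversal

section TransportPlan

variable {d m n c : ℕ} {α : Fin m → Fin m → ℝ} {μ : Fin m → ℝ}
  {β : Fin n → Fin n → ℝ} {ν : Fin n → ℝ} {γ : Fin c → Fin c → ℝ} {ξ : Fin c → ℝ}
  {ω : Fin m → Fin n → ℝ} {η : Fin n → Fin c → ℝ}

lemma isTransportPlan_iff_intertwines :
    IsTransportPlan α μ β ν ω ↔
      IsCoupling μ ν ω ∧ (of α)ᵀ * of ω = of ω * timeReversal ν (of β) := by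
  have reversal_apply (s r : Fin n) : timeReversal ν (of β) s r = ν r / ν s * β r s := by
    simp only [timeReversal, mul_diagonal, diagonal_mul, transpose_apply, of_apply, Pi.inv_apply]
    ring
  simp only [IsTransportPlan, ← Matrix.ext_iff, mul_apply, transpose_apply, of_apply,
    reversal_apply, mul_comm (α _ _)]

lemma IsTransportPlan.comp (hν : ∀ r, ν r ≠ 0) (hω : IsTransportPlan α μ β ν ω)
    (hη : IsTransportPlan β ν γ ξ η) : IsTransportPlan α μ γ ξ (gluingComp ν ω η) := by
  rw [isTransportPlan_iff_intertwines] at hω hη ⊢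
  refine ⟨hω.1.comp hη.1, ?_⟩
  rw [of_gluingComp]
  exact intertwines_comp hν hω.2 hη.2

lemma IsClassicalSystem.isTransportPlan_prod (hA : IsClassicalSystem α μ)
    (hB : IsClassicalSystem β ν) : IsTransportPlan α μ β ν (fun p r => μ p * ν r) := by
  obtain ⟨-, -, μ_pos, μ_sum, μ_invariant⟩ := hA
  obtain ⟨-, β_rowSum, ν_pos, ν_sum, -⟩ := hB
  have μ_fixed : (of α)ᵀ *ᵥ μ = μ := by
    rw [mulVec_transpose]
    exact funext μ_invariant
  have ν_fixed : ν ᵥ* timeReversal ν (of β) = ν :=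
    vecMul_timeReversal (fun r => (ν_pos r).ne') <| funext fun r => by
      simp [mulVec, dotProduct, β_rowSum r]
  refine isTransportPlan_iff_intertwines.2
    ⟨.prod (fun p => (μ_pos p).le) μ_sum (fun r => (ν_pos r).le) ν_sum, ?_⟩
  change (of α)ᵀ * vecMulVec μ ν = vecMulVec μ ν * timeReversal ν (of β)
  rw [mul_vecMulVec, vecMulVec_mul, μ_fixed, ν_fixed]

lemma Wdist_eq_iInf (k : Fin d → Fin m → ℝ) (l : Fin d → Fin n → ℝ) :
    Wdist α μ β ν k l =
      ⨅ ω : {ω // IsTransportPlan α μ β ν ω}, √(transportCost k l ω.1) := by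
  rw [Wdist, iInf]
  congr 1
  ext x
  simp [eq_comm]

lemma IsTransportPlan.Wdist_le (hω : IsTransportPlan α μ β ν ω)
    (k : Fin d → Fin m → ℝ) (l : Fin d → Fin n → ℝ) :
    Wdist α μ β ν k l ≤ √(transportCost k l ω) :=
  csInf_le ⟨0, by rintro _ ⟨_, _, rfl⟩; exact Real.sqrt_nonneg _⟩ ⟨ω, hω, rfl⟩

theorem stmt_9_general (hν : ∀ r, ν r ≠ 0) (hαβ : ∃ ω, IsTransportPlan α μ β ν ω)
    (hβγ : ∃ η, IsTransportPlan β ν γ ξ η)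
    (k : Fin d → Fin m → ℝ) (l : Fin d → Fin n → ℝ) (h : Fin d → Fin c → ℝ) :
    Wdist α μ γ ξ k h ≤ Wdist α μ β ν k l + Wdist β ν γ ξ l h := by
  have := nonempty_subtype.2 hαβ
  have := nonempty_subtype.2 hβγ
  rw [Wdist_eq_iInf k l, Wdist_eq_iInf l h]
  exact le_ciInf_add_ciInf fun ω η => calc Wdist α μ γ ξ k h
    _ ≤ √(transportCost k h (gluingComp ν ω.1 η.1)) := (ω.2.comp hν η.2).Wdist_le k h
    _ ≤ √(transportCost k l ω.1) + √(transportCost l h η.1) :=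
      ω.2.1.sqrt_transportCost_comp_le η.2.1 k l h

end TransportPlan

/-- The triangle inequality for the Wasserstein distance between classical
systems with coordinates. -/
theorem stmt_9 {d m n c : ℕ} (α : Fin m → Fin m → ℝ) (μ : Fin m → ℝ)
    (β : Fin n → Fin n → ℝ) (ν : Fin n → ℝ)
    (γ : Fin c → Fin c → ℝ) (ξ : Fin c → ℝ)
    (hA : IsClassicalSystem α μ) (hB : IsClassicalSystem β ν)
    (hC : IsClassicalSystem γ ξ)
    (k : Fin d → Fin m → ℝ) (l : Fin d → Fin n → ℝ) (h : Fin d → Fin c → ℝ) :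
    Wdist α μ γ ξ k h ≤ Wdist α μ β ν k l + Wdist β ν γ ξ l h := by
  exact stmt_9_general (fun r => (hB.2.2.1 r).ne') ⟨_, hA.isTransportPlan_prod hB⟩
    ⟨_, hB.isTransportPlan_prod hC⟩ k l h
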